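/- Let (G,c,o) be a recurrent rooted network, h a potential on it, and v ≠ o a vertex. Then for all M > 0 and every integer ℓ with 0 < ℓ < d(o,v), the network random walk {X_t} started at o satisfies P_o(h(X_ℓ) ≥ M | τ_v < τ_o^+) ≤ h(v)/M, where τ_v is the hitting time of v and τ_o^+ = min{t ≥ 1 : X_t = o}. -/

import Mathlib

open scoped ENNReal
open Filter Topology Classical
noncomputable section

/-- A rooted network: a connected, locally finite simple graph with positive
symmetric edge conductances (extended by `0` to non-edges) and a root `o`. -/
structure RootedNetwork (V : Type*) where
  G : SimpleGraph V
  locallyFinite : ∀ x : V, (G.neighborSet x).Finite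
  connected : G.Connected
  c : V → V → ℝ
  c_symm : ∀ x y, c x y = c y x
  c_pos : ∀ x y, G.Adj x y → 0 < c x y
  c_eq_zero : ∀ x y, ¬ G.Adj x y → c x y = 0
  o : V

namespace RootedNetwork

variable {V : Type*}

/-- The vertex weight `c_x = Σ_{z ∼ x} c_{xz}`. -/
noncomputable def cv (N : RootedNetwork V) (x : V) : ℝ := ∑' y, N.c x y

/-- The transition probability `p(x,y) = c_{xy} / c_x` of the network random walk. -/
noncomputable def p (N : RootedNetwork V) (x y : V) : ℝ≥0∞ :=
  ENNReal.ofReal (N.c x y / N.cv x)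

/-- The probability that the network random walk started at `x` begins with the
given finite sequence of steps. -/
noncomputable def pathProb (N : RootedNetwork V) : V → List V → ℝ≥0∞
  | _, [] => 1
  | x, y :: l => N.p x y * pathProb N y l

/-- The probability, starting from `x`, that the walk ever visits `b`
(`P_x(τ_b < ∞)`), computed by decomposing over the finite path up to the first
visit of `b`. -/
noncomputable def hitProb (N : RootedNetwork V) (x b : V) : ℝ≥0∞ :=
  if x = b then 1
  else ∑' l : {l : List V // l.getLast? = some b ∧ b ∉ l.dropLast}, N.pathProb x l.1

/-- A rooted network is recurrent if the walk started from any vertex almost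
surely visits the root `o`. -/
def Recurrent (N : RootedNetwork V) : Prop := ∀ x : V, N.hitProb x N.o = 1

/-- The Green kernel `G_o(x,y) = Σ_{n ≥ 0} P_x(X_n = y, τ_o > n)` of the walk
killed at the root, computed as a sum over finite paths from `x` to `y`
avoiding `o` (the `n = 0` term is the first summand). -/
noncomputable def GreenKer (N : RootedNetwork V) (x y : V) : ℝ≥0∞ :=
  (if x = y ∧ x ≠ N.o then 1 else 0) +
    ∑' l : {l : List V // l.getLast? = some y ∧ N.o ∉ x :: l}, N.pathProb x l.1

/-- The Green density `g_o(x,y) = G_o(x,y) / c_y`. -/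
noncomputable def greenDensity (N : RootedNetwork V) (x y : V) : ℝ≥0∞ :=
  N.GreenKer x y / ENNReal.ofReal (N.cv y)

/-- The network Laplacian `Δ f (v) = Σ_{x ∼ v} c_{vx} (f(x) - f(v))`. -/
noncomputable def lap (N : RootedNetwork V) (f : V → ℝ) (v : V) : ℝ :=
  ∑' x, N.c v x * (f x - f v)

/-- A potential: a nonnegative function vanishing at `o`, with Laplacian `1`
at `o`, harmonic everywhere else. -/
def IsPotential (N : RootedNetwork V) (h : V → ℝ) : Prop :=
  (∀ v, 0 ≤ h v) ∧ h N.o = 0 ∧ N.lap h N.o = 1 ∧ ∀ v, v ≠ N.o → N.lap h v = 0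

end RootedNetwork
namespace RootedNetwork

variable {V : Type*}

/-- `P_o(τ_v < τ_o^+)`: the probability that the walk started at `o` hits `v`
before returning to `o`, decomposed over the path up to the first visit of `v`. -/
noncomputable def hitBeforeReturn (N : RootedNetwork V) (v : V) : ℝ≥0∞ :=
  ∑' l : {l : List V // l.getLast? = some v ∧ v ∉ l.dropLast ∧ N.o ∉ l},
    N.pathProb N.o l.1

/-- `P_o(oγ, τ_v < τ_o^+)`: the probability that the walk started at `o` begins
with the steps `γ` and hits `v` before returning to `o`. -/
noncomputable def pathThenHit (N : RootedNetwork V) (γ : List V) (v : V) : ℝ≥0∞ :=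
  ∑' l : {l : List V // γ <+: l ∧ l.getLast? = some v ∧ v ∉ l.dropLast ∧ N.o ∉ l},
    N.pathProb N.o l.1

end RootedNetwork
namespace RootedNetwork

/-- `P_o(h(X_ℓ) ≥ M, τ_v < τ_o^+)`: the probability that the walk started at
`o` satisfies `h(X_ℓ) ≥ M` and hits `v` before returning to `o`, decomposed
over the path up to the first visit of `v`. -/
noncomputable def levelThenHit {V : Type*} (N : RootedNetwork V) (h : V → ℝ)
    (M : ℝ) (ℓ : ℕ) (v : V) : ℝ≥0∞ :=
  ∑' l : {l : List V // l.getLast? = some v ∧ v ∉ l.dropLast ∧ N.o ∉ l ∧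
      M ≤ h ((N.o :: l).getD ℓ N.o)},
    N.pathProb N.o l.1

end RootedNetwork

/-!
A path from `o` to `v` that does not return to `o` splits uniquely at its first visit to `v` into a
first-passage path and a loop at `v` avoiding `o`. Summing path probabilities therefore multiplies
`P_o(τ_v < τ_o^+)`, and likewise the probability of hitting `v` before returning to `o` after
having visited a set `A`, by the same loop factor. Reversibility of the walk turns the sums over
non-returning paths from `o` to `v` into first-passage probabilities from `v` to `o`. For the walk
from `v`, the probability of visiting `A = {h ≥ M}` and then reaching `o` is at most `h v / M` by
the maximal inequality for the nonnegative superharmonic function `h`.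
-/

namespace RootedNetwork

variable {V : Type*} (N : RootedNetwork V)

/-! ### Conductances and transition probabilities -/

theorem c_nonneg (x y : V) : 0 ≤ N.c x y := by
  by_cases hadj : N.G.Adj x y
  · exact (N.c_pos x y hadj).le
  · exact (N.c_eq_zero x y hadj).ge

theorem summable_c_mul (x : V) (f : V → ℝ) : Summable fun y => N.c x y * f y := by
  refine summable_of_hasFiniteSupport ((N.locallyFinite x).subset fun y hy => ?_)
  by_contra hadj
  exact left_ne_zero_of_mul hy (N.c_eq_zero x y hadj)

theorem cv_nonneg (x : V) : 0 ≤ N.cv x :=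
  tsum_nonneg (N.c_nonneg x)

theorem c_le_cv (x y : V) : N.c x y ≤ N.cv x := by
  have hsum : Summable (N.c x) := by simpa using N.summable_c_mul x fun _ => 1
  exact hsum.le_tsum y fun z _ => N.c_nonneg x z

theorem cv_pos [Nontrivial V] (x : V) : 0 < N.cv x := by
  obtain ⟨y, hxy⟩ := N.connected.preconnected.exists_adj_of_nontrivial x
  exact (N.c_pos x y hxy).trans_le (N.c_le_cv x y)

theorem ofReal_cv_mul_p (x y : V) :
    ENNReal.ofReal (N.cv x) * N.p x y = ENNReal.ofReal (N.c x y) := by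
  rw [p, ← ENNReal.ofReal_mul (N.cv_nonneg x), mul_div_cancel_of_imp']
  exact fun hcv => le_antisymm (hcv ▸ N.c_le_cv x y) (N.c_nonneg x y)

theorem lap_eq_tsum_sub (f : V → ℝ) (x : V) :
    N.lap f x = ∑' y, N.c x y * f y - N.cv x * f x := by
  simp only [lap, mul_sub]
  rw [(N.summable_c_mul x f).tsum_sub (N.summable_c_mul x fun _ => f x), tsum_mul_right, cv]

theorem tsum_p_mul_ofReal_le {f : V → ℝ} (hf : ∀ y, 0 ≤ f y) {x : V} (hlap : N.lap f x ≤ 0) :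
    ∑' y, N.p x y * ENNReal.ofReal (f y) ≤ ENNReal.ofReal (f x) := by
  have hterm (y : V) :
      N.p x y * ENNReal.ofReal (f y) = ENNReal.ofReal (N.c x y * f y / N.cv x) := by
    rw [p, ← ENNReal.ofReal_mul (div_nonneg (N.c_nonneg x y) (N.cv_nonneg x)), div_mul_eq_mul_div]
  have hnonneg (y : V) : 0 ≤ N.c x y * f y / N.cv x :=
    div_nonneg (mul_nonneg (N.c_nonneg x y) (hf y)) (N.cv_nonneg x)
  rw [lap_eq_tsum_sub] at hlap
  simp only [hterm]
  rw [← ENNReal.ofReal_tsum_of_nonneg hnonneg ((N.summable_c_mul x f).div_const _), tsum_div_const]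
  exact ENNReal.ofReal_le_ofReal (div_le_of_le_mul₀ (N.cv_nonneg x) (hf x) (by linarith))

theorem tsum_p_le_one (x : V) : ∑' y, N.p x y ≤ 1 := by
  simpa using N.tsum_p_mul_ofReal_le (f := fun _ => 1) (fun _ => zero_le_one) (x := x)
    (by simp [lap])

theorem tsum_p_mul_ofReal_div_le {f : V → ℝ} (hf : ∀ y, 0 ≤ f y) {x : V} (hlap : N.lap f x ≤ 0)
    (M : ℝ) :
    ∑' y, N.p x y * ENNReal.ofReal (f y / M) ≤ ENNReal.ofReal (f x / M) := by
  simp only [div_eq_mul_inv, ENNReal.ofReal_mul (hf _), ← mul_assoc, ENNReal.tsum_mul_right]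
  gcongr
  exact N.tsum_p_mul_ofReal_le hf hlap

/-! ### Path probabilities -/

theorem pathProb_append {x y : V} {l : List V} (hl : l.getLast? = some y) (l' : List V) :
    N.pathProb x (l ++ l') = N.pathProb x l * N.pathProb y l' := by
  obtain ⟨m, rfl⟩ := List.getLast?_eq_some_iff.1 hl
  clear hl
  induction m generalizing x with
  | nil => simp [pathProb]
  | cons a m ih => simp only [List.cons_append, pathProb, ih, mul_assoc]

theorem cv_mul_pathProb_reverse (x y : V) (m : List V) :
    ENNReal.ofReal (N.cv x) * N.pathProb x (m ++ [y]) =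
      ENNReal.ofReal (N.cv y) * N.pathProb y (m.reverse ++ [x]) := by
  induction m generalizing x with
  | nil => simp [pathProb, ofReal_cv_mul_p, N.c_symm x y]
  | cons a m ih =>
    calc ENNReal.ofReal (N.cv x) * (N.p x a * N.pathProb a (m ++ [y]))
        = N.p a x * (ENNReal.ofReal (N.cv a) * N.pathProb a (m ++ [y])) := by
          rw [← mul_assoc, ofReal_cv_mul_p, N.c_symm x a, ← ofReal_cv_mul_p]
          ring
      _ = ENNReal.ofReal (N.cv y) * (N.pathProb y (m.reverse ++ [a]) * N.pathProb a [x]) := by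
          rw [ih a]
          simp only [pathProb]
          ring
      _ = ENNReal.ofReal (N.cv y) * N.pathProb y ((a :: m).reverse ++ [x]) := by
          rw [← N.pathProb_append (by simp), List.reverse_cons]

/-- The total probability of the finite paths from `x` whose list of steps lies in `S`. It is the
probability that the walk begins with a path in `S` when no path in `S` extends another one, and
the expected number of initial segments in `S` in general. -/
def pathMass (x : V) (S : Set (List V)) : ℝ≥0∞ :=
  ∑' l : S, N.pathProb x l

theorem pathMass_empty (x : V) : N.pathMass x ∅ = 0 :=
  tsum_empty

theorem pathMass_singleton_nil (x : V) : N.pathMass x {[]} = 1 :=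
  tsum_singleton [] (N.pathProb x)

theorem pathMass_mono (x : V) {S T : Set (List V)} (hST : S ⊆ T) :
    N.pathMass x S ≤ N.pathMass x T :=
  ENNReal.tsum_mono_subtype _ hST

theorem pathMass_image2_append {x y : V} {S T : Set (List V)}
    (hS : ∀ l ∈ S, l.getLast? = some y)
    (hinj : (S ×ˢ T).InjOn fun q : List V × List V => q.1 ++ q.2) :
    N.pathMass x (Set.image2 (· ++ ·) S T) = N.pathMass x S * N.pathMass y T := by
  have happend (q : S × T) :
      N.pathProb x (q.1 ++ q.2) = N.pathProb x q.1 * N.pathProb y q.2 :=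
    N.pathProb_append (hS q.1 q.1.2) q.2
  rw [pathMass, ← Set.image_prod, tsum_image _ hinj, ← (Equiv.Set.prod S T).symm.tsum_eq]
  refine (tsum_congr happend).trans ?_
  simp only [ENNReal.tsum_prod', ENNReal.tsum_mul_left, ENNReal.tsum_mul_right, pathMass]

theorem cv_mul_pathMass_reverse (x y : V) (S : Set (List V)) :
    ENNReal.ofReal (N.cv x) * N.pathMass x ((· ++ [y]) '' S) =
      ENNReal.ofReal (N.cv y) * N.pathMass y ((· ++ [x]) '' (List.reverse ⁻¹' S)) := by
  rw [← List.reverse_involutive.image_eq_preimage_symm, pathMass, pathMass,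
    tsum_image _ (List.append_left_injective _).injOn,
    tsum_image _ (List.append_left_injective _).injOn,
    tsum_image (fun m => N.pathProb y (m ++ [x])) List.reverse_injective.injOn,
    ← ENNReal.tsum_mul_left, ← ENNReal.tsum_mul_left]
  exact tsum_congr fun m => N.cv_mul_pathProb_reverse x y m

theorem pathMass_le_tsum_of_cons (x : V) {S : Set (List V)} {T : V → Set (List V)}
    (hnil : [] ∉ S) (hcons : ∀ y l, y :: l ∈ S → l ∈ T y) :
    N.pathMass x S ≤ ∑' y, N.p x y * N.pathMass y (T y) := by
  have hsub : S ⊆ ⋃ y, List.cons y '' T y := by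
    rintro (_ | ⟨y, l⟩) hl
    · exact absurd hl hnil
    · exact Set.mem_iUnion.2 ⟨y, l, hcons y l hl, rfl⟩
  refine (N.pathMass_mono x hsub).trans ((ENNReal.tsum_iUnion_le_tsum _ _).trans_eq ?_)
  refine tsum_congr fun y => ?_
  rw [tsum_image _ List.cons_injective.injOn]
  simp only [pathProb, ENNReal.tsum_mul_left, pathMass]

theorem pathMass_le_of_forall_length_lt {x : V} {S : Set (List V)} {C : ℝ≥0∞}
    (hC : ∀ n, N.pathMass x {l ∈ S | l.length < n} ≤ C) : N.pathMass x S ≤ C := by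
  rw [pathMass, ENNReal.tsum_eq_iSup_sum]
  refine iSup_le fun F => ?_
  obtain ⟨n, hn⟩ : ∃ n, ∀ l ∈ F, l.1.length < n :=
    ⟨(F.sup fun l => l.1.length) + 1, fun l hl =>
      Nat.lt_succ_of_le (Finset.le_sup (f := fun l : S => l.1.length) hl)⟩
  refine le_trans ?_ (hC n)
  rw [← Finset.tsum_subtype]
  refine ENNReal.tsum_comp_le_tsum_of_injective (f := fun l : F => ⟨l.1.1, l.1.2, hn l.1 l.2⟩) ?_
    fun l : {l ∈ S | l.length < n} => N.pathProb x l
  exact fun l l' hll' => Subtype.ext (Subtype.ext (Subtype.mk.inj hll'))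

/-- A minimum principle: at each vertex either the bound is already known, or `S` is inherited by
the path after its first step and `u` is excessive. -/
theorem pathMass_le_of_excessive {S : V → Set (List V)} {u : V → ℝ≥0∞}
    (hS : ∀ x, N.pathMass x (S x) ≤ u x ∨
      [] ∉ S x ∧ (∀ y l, y :: l ∈ S x → l ∈ S y) ∧ ∑' y, N.p x y * u y ≤ u x) (x : V) :
    N.pathMass x (S x) ≤ u x := by
  refine N.pathMass_le_of_forall_length_lt fun n => ?_
  induction n generalizing x with
  | zero => simp [pathMass_empty]
  | succ n ih =>
    rcases hS x with hle | ⟨hnil, hcons, hu⟩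
    · exact (N.pathMass_mono x fun l hl => hl.1).trans hle
    · calc N.pathMass x {l ∈ S x | l.length < n + 1}
          ≤ ∑' y, N.p x y * N.pathMass y {l ∈ S y | l.length < n} :=
            N.pathMass_le_tsum_of_cons x (fun h => hnil h.1) fun y l hl =>
              ⟨hcons y l hl.1, Nat.lt_of_succ_lt_succ hl.2⟩
        _ ≤ ∑' y, N.p x y * u y := by gcongr with y; exact ih y
        _ ≤ u x := hu

/-! ### First passage and the maximal inequality -/

/-- The step lists of the paths from `x` that end at their first visit to `b`; for `x = b` this is
the empty list of steps only. -/
def passages (x b : V) : Set (List V) :=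
  {l | (x :: l).getLast? = some b ∧ b ∉ (x :: l).dropLast}

/-- The step lists of the paths from `x` that visit `A`, the starting point included. -/
def visiting (A : Set V) (x : V) : Set (List V) :=
  {l | ∃ z ∈ x :: l, z ∈ A}

theorem visiting_univ (x : V) : visiting Set.univ x = Set.univ :=
  Set.eq_univ_of_forall fun _ => ⟨x, List.mem_cons_self, trivial⟩

theorem reverse_append_mem_visiting (A : Set V) (x y : V) (m : List V) :
    m.reverse ++ [y] ∈ visiting A x ↔ m ++ [x] ∈ visiting A y := by
  have hrev : (x :: (m.reverse ++ [y])).reverse = y :: (m ++ [x]) := by simp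
  simp only [visiting, Set.mem_ofPred_eq, ← hrev, List.mem_reverse]

theorem passages_self (b : V) : passages b b = {[]} := by
  ext l
  cases l <;> simp [passages]

theorem nil_notMem_passages {x b : V} (hx : x ≠ b) : [] ∉ passages x b := by
  simp [passages, hx]

theorem cons_mem_passages {x b : V} (hx : x ≠ b) (y : V) (l : List V) :
    y :: l ∈ passages x b ↔ l ∈ passages y b := by
  simp [passages, hx.symm]

theorem passages_of_ne {x b : V} (hx : x ≠ b) :
    passages x b = {l | l.getLast? = some b ∧ b ∉ l.dropLast} := by
  ext l
  cases l <;> simp [passages, hx, hx.symm]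

theorem passages_eq_image {x b : V} (hx : x ≠ b) :
    passages x b = (· ++ [b]) '' {m | b ∉ m} := by
  rw [passages_of_ne hx]
  ext l
  constructor
  · rintro ⟨hlast, hb⟩
    obtain ⟨m, rfl⟩ := List.getLast?_eq_some_iff.1 hlast
    exact ⟨m, by simpa using hb, rfl⟩
  · rintro ⟨m, hb, rfl⟩
    exact ⟨List.getLast?_concat, by simpa using hb⟩

theorem hitProb_eq_pathMass (x b : V) : N.hitProb x b = N.pathMass x (passages x b) := by
  by_cases hx : x = b
  · rw [hitProb, if_pos hx, hx, passages_self, pathMass_singleton_nil]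
  · rw [hitProb, if_neg hx, passages_of_ne hx]
    rfl

theorem hitProb_le_one (x b : V) : N.hitProb x b ≤ 1 := by
  rw [hitProb_eq_pathMass]
  refine N.pathMass_le_of_excessive (S := fun x => passages x b) (u := fun _ => 1)
    (fun y => ?_) x
  by_cases hy : y = b
  · left
    rw [hy, passages_self, pathMass_singleton_nil]
  · right
    refine ⟨nil_notMem_passages hy, fun z l => (cons_mem_passages hy z l).1, ?_⟩
    simpa using N.tsum_p_le_one y

/-- While the walk is outside `A`, visiting `A` remains a condition on its future; once it is in
`A`, the bound `1` suffices. -/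
theorem pathMass_passages_inter_visiting_le {b : V} {A : Set V} {u : V → ℝ≥0∞}
    (huA : ∀ a ∈ A, 1 ≤ u a) (hu : ∀ x, x ≠ b → ∑' y, N.p x y * u y ≤ u x) (x : V) :
    N.pathMass x (passages x b ∩ visiting A x) ≤ u x := by
  refine N.pathMass_le_of_excessive (S := fun x => passages x b ∩ visiting A x) (fun y => ?_) x
  by_cases hyA : y ∈ A
  · left
    calc N.pathMass y (passages y b ∩ visiting A y)
        ≤ N.pathMass y (passages y b) := N.pathMass_mono y Set.inter_subset_left
      _ = N.hitProb y b := (N.hitProb_eq_pathMass y b).symm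
      _ ≤ 1 := N.hitProb_le_one y b
      _ ≤ u y := huA y hyA
  by_cases hyb : y = b
  · left
    have hempty : passages y b ∩ visiting A y = ∅ := by
      simp [hyb, passages_self, visiting, hyb ▸ hyA]
    simp [hempty, pathMass_empty]
  · right
    refine ⟨fun h => nil_notMem_passages hyb h.1, fun z l hl => ⟨?_, ?_⟩, hu y hyb⟩
    · exact (cons_mem_passages hyb z l).1 hl.1
    · simpa [visiting, hyA] using hl.2

/-! ### Non-returning paths -/

/-- The step lists of the paths from `x` to `y` that do not return to `x`. -/
def nonreturning (x y : V) : Set (List V) :=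
  {l | l.getLast? = some y ∧ x ∉ l}

/-- The step lists of the paths from `x` that do not return to `x` and end at their first visit
to `y`. -/
def firstNonreturning (x y : V) : Set (List V) :=
  {l | l.getLast? = some y ∧ y ∉ l.dropLast ∧ x ∉ l}

/-- The step lists of the closed paths based at `y` that avoid `x`, including the trivial one. -/
def loopsAvoiding (x y : V) : Set (List V) :=
  {l | (y :: l).getLast? = some y ∧ x ∉ l}

theorem hitBeforeReturn_eq_pathMass (v : V) :
    N.hitBeforeReturn v = N.pathMass N.o (firstNonreturning N.o v) :=
  rfl

theorem levelThenHit_le_pathMass (h : V → ℝ) (M : ℝ) (ℓ : ℕ) (v : V) :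
    N.levelThenHit h M ℓ v ≤
      N.pathMass N.o (firstNonreturning N.o v ∩ visiting {x | M ≤ h x} N.o) := by
  refine N.pathMass_mono N.o fun l hl => ⟨⟨hl.1, hl.2.1, hl.2.2.1⟩, _, ?_, hl.2.2.2⟩
  rcases lt_or_ge ℓ (N.o :: l).length with hℓ | hℓ
  · rw [List.getD_eq_getElem _ _ hℓ]
    exact List.getElem_mem hℓ
  · rw [List.getD_eq_default _ _ hℓ]
    exact List.mem_cons_self

theorem nonreturning_eq_image {x y : V} (hxy : x ≠ y) :
    nonreturning x y = (· ++ [y]) '' {m | x ∉ m} := by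
  ext l
  constructor
  · rintro ⟨hlast, hx⟩
    obtain ⟨m, rfl⟩ := List.getLast?_eq_some_iff.1 hlast
    exact ⟨m, fun hm => hx (List.mem_append_left _ hm), rfl⟩
  · rintro ⟨m, hx, rfl⟩
    exact ⟨List.getLast?_concat, by simpa [hxy] using hx⟩

theorem cv_mul_pathMass_nonreturning_inter_visiting {x y : V} (hxy : x ≠ y) (A : Set V) :
    ENNReal.ofReal (N.cv x) * N.pathMass x (nonreturning x y ∩ visiting A x) =
      ENNReal.ofReal (N.cv y) * N.pathMass y (passages y x ∩ visiting A y) := by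
  rw [nonreturning_eq_image hxy, passages_eq_image hxy.symm, ← Set.image_inter_preimage,
    ← Set.image_inter_preimage, cv_mul_pathMass_reverse]
  congr 3
  ext m
  exact and_congr (by simp) (reverse_append_mem_visiting A x y m)

theorem injOn_append_firstNonreturning (x y : V) (T : Set (List V)) :
    (firstNonreturning x y ×ˢ T).InjOn fun q : List V × List V => q.1 ++ q.2 := by
  rintro ⟨l, l'⟩ ⟨⟨hl, hyl, -⟩, -⟩ ⟨r, r'⟩ ⟨⟨hr, hyr, -⟩, -⟩ heq
  obtain ⟨m, rfl⟩ := List.getLast?_eq_some_iff.1 hl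
  obtain ⟨n, rfl⟩ := List.getLast?_eq_some_iff.1 hr
  rw [List.dropLast_concat] at hyl hyr
  have hlen : (m ++ [y]).length = (n ++ [y]).length := by
    simpa [List.idxOf_append, hyl, hyr] using congrArg (List.idxOf y) heq
  obtain ⟨hprefix, hsuffix⟩ := List.append_inj heq hlen
  exact Prod.ext hprefix hsuffix

theorem image2_append_loopsAvoiding (x y : V) :
    Set.image2 (· ++ ·) (firstNonreturning x y) (loopsAvoiding x y) = nonreturning x y := by
  ext l
  constructor
  · rintro ⟨l₁, ⟨hl₁, -, hx₁⟩, l₂, ⟨hl₂, hx₂⟩, rfl⟩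
    obtain ⟨m, rfl⟩ := List.getLast?_eq_some_iff.1 hl₁
    refine ⟨?_, by simp_all⟩
    simpa using hl₂
  · rintro ⟨hlast, hx⟩
    obtain ⟨m, l₂, rfl, hym⟩ := List.eq_append_cons_of_mem (List.mem_of_getLast? hlast)
    refine ⟨m ++ [y], ⟨?_, ?_, ?_⟩, l₂, ⟨?_, ?_⟩, ?_⟩ <;> simp_all

theorem image2_append_loopsAvoiding_visiting_subset (x y : V) (A : Set V) :
    Set.image2 (· ++ ·) (firstNonreturning x y ∩ visiting A x) (loopsAvoiding x y) ⊆
      nonreturning x y ∩ visiting A x := by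
  rintro _ ⟨l, ⟨hl, z, hz, hzA⟩, l', hl', rfl⟩
  refine ⟨?_, z, List.mem_append_left l' hz, hzA⟩
  rw [← image2_append_loopsAvoiding]
  exact Set.mem_image2_of_mem hl hl'

theorem pathMass_nonreturning (x y : V) :
    N.pathMass x (nonreturning x y) =
      N.pathMass x (firstNonreturning x y) * N.pathMass y (loopsAvoiding x y) := by
  rw [← image2_append_loopsAvoiding]
  exact N.pathMass_image2_append (fun l hl => hl.1) (injOn_append_firstNonreturning x y _)

theorem pathMass_firstNonreturning_inter_visiting_mul_le (x y : V) (A : Set V) :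
    N.pathMass x (firstNonreturning x y ∩ visiting A x) * N.pathMass y (loopsAvoiding x y) ≤
      N.pathMass x (nonreturning x y ∩ visiting A x) := by
  rw [← N.pathMass_image2_append (fun l hl => hl.1.1)
    ((injOn_append_firstNonreturning x y _).mono (Set.prod_mono_left Set.inter_subset_left))]
  exact N.pathMass_mono x (image2_append_loopsAvoiding_visiting_subset x y A)

theorem cv_mul_hitProb {x y : V} (hxy : x ≠ y) :
    ENNReal.ofReal (N.cv y) * N.hitProb y x = ENNReal.ofReal (N.cv x) *
      (N.pathMass x (firstNonreturning x y) * N.pathMass y (loopsAvoiding x y)) := by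
  have hrev := N.cv_mul_pathMass_nonreturning_inter_visiting hxy Set.univ
  simp only [visiting_univ, Set.inter_univ] at hrev
  rw [hitProb_eq_pathMass, ← hrev, pathMass_nonreturning]

theorem pathMass_firstNonreturning_inter_visiting_mul_hitProb_le {x y : V} (hxy : x ≠ y)
    {A : Set V} {u : V → ℝ≥0∞} (huA : ∀ a ∈ A, 1 ≤ u a)
    (hu : ∀ z, z ≠ x → ∑' w, N.p z w * u w ≤ u z) :
    N.pathMass x (firstNonreturning x y ∩ visiting A x) * N.hitProb y x ≤
      u y * N.pathMass x (firstNonreturning x y) := by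
  have : Nontrivial V := ⟨x, y, hxy⟩
  have hcv : ENNReal.ofReal (N.cv y) ≠ 0 := (ENNReal.ofReal_pos.2 (N.cv_pos y)).ne'
  rw [← ENNReal.mul_le_mul_iff_right hcv ENNReal.ofReal_ne_top]
  set q := N.pathMass x (firstNonreturning x y)
  set qA := N.pathMass x (firstNonreturning x y ∩ visiting A x)
  set loops := N.pathMass y (loopsAvoiding x y)
  calc ENNReal.ofReal (N.cv y) * (qA * N.hitProb y x)
      = ENNReal.ofReal (N.cv x) * (qA * loops) * q := by
        rw [mul_left_comm, N.cv_mul_hitProb hxy]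
        ring
    _ ≤ ENNReal.ofReal (N.cv x) * N.pathMass x (nonreturning x y ∩ visiting A x) * q := by
        gcongr
        exact N.pathMass_firstNonreturning_inter_visiting_mul_le x y A
    _ = ENNReal.ofReal (N.cv y) * N.pathMass y (passages y x ∩ visiting A y) * q := by
        rw [N.cv_mul_pathMass_nonreturning_inter_visiting hxy]
    _ ≤ ENNReal.ofReal (N.cv y) * (u y * q) := by
        rw [mul_assoc]
        gcongr
        exact N.pathMass_passages_inter_visiting_le huA hu y

end RootedNetwork

/-- The first factor is `P_o(max_{t ≤ τ_v} h(X_t) ≥ M, τ_v < τ_o^+)`. -/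
theorem condProb_level_le_general {V : Type*} (N : RootedNetwork V) {h : V → ℝ}
    (h_nonneg : ∀ x, 0 ≤ h x) (h_super : ∀ x, x ≠ N.o → N.lap h x ≤ 0)
    {v : V} (hv : v ≠ N.o) {M : ℝ} (hM : 0 < M) :
    N.pathMass N.o (RootedNetwork.firstNonreturning N.o v ∩
        RootedNetwork.visiting {x | M ≤ h x} N.o) * N.hitProb v N.o ≤
      ENNReal.ofReal (h v / M) * N.hitBeforeReturn v := by
  rw [N.hitBeforeReturn_eq_pathMass]
  exact N.pathMass_firstNonreturning_inter_visiting_mul_hitProb_le hv.symm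
    (u := fun x => ENNReal.ofReal (h x / M))
    (fun _ hx => ENNReal.one_le_ofReal.2 ((one_le_div hM).2 hx))
    fun x hx => N.tsum_p_mul_ofReal_div_le h_nonneg (h_super x hx) M

/-- In a recurrent rooted network with potential `h`, for every vertex
`v ≠ o`, every `M > 0` and every integer `0 < ℓ < d(o,v)`, the walk started at
`o` satisfies `P_o(h(X_ℓ) ≥ M | τ_v < τ_o^+) ≤ h(v)/M`. -/
theorem condProb_level_le {V : Type*} (N : RootedNetwork V)
    (hrec : N.Recurrent) (h : V → ℝ) (hpot : N.IsPotential h)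
    (v : V) (hv : v ≠ N.o) (M : ℝ) (hM : 0 < M)
    (ℓ : ℕ) (hl : 0 < ℓ) (hld : ℓ < N.G.dist N.o v) :
    N.levelThenHit h M ℓ v / N.hitBeforeReturn v ≤ ENNReal.ofReal (h v / M) := by
  obtain ⟨h_nonneg, -, -, h_harm⟩ := hpot
  have hmax := condProb_level_le_general N h_nonneg (fun x hx => (h_harm x hx).le) hv hM
  rw [hrec v, mul_one] at hmax
  exact ENNReal.div_le_of_le_mul ((N.levelThenHit_le_pathMass h M ℓ v).trans hmax)
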